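/- Let B be an amenable Banach algebra and let A ⊆ B be a closed two-sided ideal. If A has a bounded approximate identity, then A is amenable: for every Banach A-bimodule X and every bounded derivation D : A → X*, there exists φ ∈ X* with D(a) = a·φ − φ·a for all a ∈ A. -/

import Mathlib

noncomputable section

/-- A Banach `A`-bimodule structure on a Banach space `X`: bounded bilinear left and right
actions (encoded as continuous linear maps `l`, `r`, where `l a x = a·x` and `r a x = x·a`)
satisfying `(ab)·x = a·(b·x)`, `x·(ab) = (x·a)·b` and `(a·x)·b = a·(x·b)`. -/
structure BanachBimodule (A X : Type*) [NonUnitalNormedRing A] [NormedSpace ℂ A]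
    [NormedAddCommGroup X] [NormedSpace ℂ X] where
  l : A →L[ℂ] X →L[ℂ] X
  r : A →L[ℂ] X →L[ℂ] X
  l_mul : ∀ a b x, l (a * b) x = l a (l b x)
  r_mul : ∀ a b x, r (a * b) x = r b (r a x)
  l_r : ∀ a b x, r b (l a x) = l a (r b x)

variable {A X : Type*} [NonUnitalNormedRing A] [NormedSpace ℂ A]
  [IsScalarTower ℂ A A] [SMulCommClass ℂ A A] [CompleteSpace A]
  [NormedAddCommGroup X] [NormedSpace ℂ X] [CompleteSpace X]

/-- `(S, T)` is a double centralizer from `A` into `X`: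
`S(αa) = S(α)·a`, `T(aα) = a·T(α)` and `a·S(α) = T(a)·α`. -/
def IsDoubleCentralizer (M : BanachBimodule A X) (S T : A →L[ℂ] X) : Prop :=
  (∀ α a : A, S (α * a) = M.r a (S α)) ∧
  (∀ a α : A, T (a * α) = M.l a (T α)) ∧
  (∀ a α : A, M.l a (S α) = M.r α (T a))

/-- The canonical bounded linear map `ι_X : x ↦ (L_x, R_x)` where `L_x a = x·a`,
`R_x a = a·x`. -/
def iotaDC (M : BanachBimodule A X) : X →L[ℂ] (A →L[ℂ] X) × (A →L[ℂ] X) :=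
  M.r.flip.prod M.l.flip

/-- `B` is an *envelope* of `A`: `A` is a two-sided ideal of `B` with bounded injective
inclusion `incl : A → B be` (an algebra homomorphism), the products `ba` and `ab`
(`b ∈ B`, `a ∈ A`) are given by `lmul b a` and `rmul b a` inside `A`, and
`max (‖ba‖, ‖ab‖) ≤ C·‖a‖·‖b‖` for some `C > 0`. -/
structure Envelope (A B : Type*) [NonUnitalNormedRing A] [NormedSpace ℂ A]
    [NonUnitalNormedRing B] [NormedSpace ℂ B] where
  incl : A →L[ℂ] B
  incl_mul : ∀ a c : A, incl (a * c) = incl a * incl c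
  incl_inj : Function.Injective incl
  lmul : B →L[ℂ] A →L[ℂ] A
  rmul : B →L[ℂ] A →L[ℂ] A
  incl_lmul : ∀ (b : B) (a : A), incl (lmul b a) = b * incl a
  incl_rmul : ∀ (b : B) (a : A), incl (rmul b a) = incl a * b
  norm_bound : ∃ C > 0, ∀ (b : B) (a : A), max ‖lmul b a‖ ‖rmul b a‖ ≤ C * ‖a‖ * ‖b‖

variable {B : Type*} [NonUnitalNormedRing B] [NormedSpace ℂ B]
  [IsScalarTower ℂ B B] [SMulCommClass ℂ B B] [CompleteSpace B]

/-- Restriction of a Banach `B`-bimodule structure along the inclusion `A → B`,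
making `X` a Banach `A`-bimodule. -/
def BanachBimodule.restrict (M : BanachBimodule B X) (E : Envelope A B) :
    BanachBimodule A X where
  l := M.l.comp E.incl
  r := M.r.comp E.incl
  l_mul := by
    intro a b x
    simp only [ContinuousLinearMap.comp_apply, E.incl_mul, M.l_mul]
  r_mul := by
    intro a b x
    simp only [ContinuousLinearMap.comp_apply, E.incl_mul, M.r_mul]
  l_r := by
    intro a b x
    simp only [ContinuousLinearMap.comp_apply, M.l_r]

/-- A bounded approximate identity for `A`. -/
def HasBAI (A : Type*) [NonUnitalNormedRing A] [NormedSpace ℂ A] : Prop :=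
  ∃ (ι : Type) (p : Filter ι) (e : ι → A), p.NeBot ∧ (∃ C : ℝ, ∀ i, ‖e i‖ ≤ C) ∧
    ∀ a : A, Filter.Tendsto (fun i => e i * a) p (nhds a) ∧
      Filter.Tendsto (fun i => a * e i) p (nhds a)

/-- `C` is amenable: for every Banach `C`-bimodule `X`, every bounded derivation
`D : C → X*` into the dual bimodule (actions `(c·φ)(x) = φ(x·c)`, `(φ·c)(x) = φ(c·x)`)
is inner, i.e. of the form `c ↦ c·φ − φ·c`. -/
def IsAmenable.{u} (C : Type*) [NonUnitalNormedRing C] [NormedSpace ℂ C]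
    [CompleteSpace C] : Prop :=
  ∀ (X : Type u) [NormedAddCommGroup X] [NormedSpace ℂ X] [CompleteSpace X],
    ∀ (M : BanachBimodule C X) (D : C →L[ℂ] X →L[ℂ] ℂ),
      (∀ b c : C, D (b * c) = (D c).comp (M.r b) + (D b).comp (M.l c)) →
      ∃ φ : X →L[ℂ] ℂ, ∀ b : C, D b = φ.comp (M.r b) - φ.comp (M.l b)

/-! Let `e` run along an ultrafilter refining the bounded approximate identity of `A`. On the
closed sub-bimodule `{x | e·x → x and x·e → x}`, which contains `A·X·A`, the actions of `A` extend
to `B` by `b·x = lim (be)·x` and `x·b = lim x·(eb)`, and a derivation `D` of `A` extends to `B` by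
`D' b = lim (D(be) - b·D e)`, the limit being taken pointwise. Amenability of `B` makes `D` inner
there. Subtracting the inner derivation of a Hahn–Banach extension of the implementing functional
leaves a derivation that vanishes on `A·X·A`, hence satisfies `D a = a·α + α·a` with `α = lim D e`;
it is inner because passing from `α` to `α - 2 lim α(e·x)` flips the sign of `α` on `A·X` and
changes nothing on `X·A`. -/

open Filter Topology

section LimitOperators

variable {𝕜 ι V W Z : Type*} [NontriviallyNormedField 𝕜]
  [SeminormedAddCommGroup V] [NormedSpace 𝕜 V] [SeminormedAddCommGroup W] [NormedSpace 𝕜 W]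
  [NormedAddCommGroup Z] [NormedSpace 𝕜 Z] {l : Filter ι} {K : ℝ}

theorem isClosed_setOfPred_tendsto_clm_apply {T : ι → V →L[𝕜] W} (hT : ∀ᶠ i in l, ‖T i‖ ≤ K)
    (S : V →L[𝕜] W) : IsClosed {x | Tendsto (T · x) l (𝓝 (S x))} := by
  let T' : {i // ‖T i‖ ≤ K} → V →L[𝕜] W := fun i => T i
  have hT' : Equicontinuous ((↑) ∘ T') := by
    have hbdd : ∃ C, ∀ i, ‖T' i‖ ≤ C := ⟨K, fun i => i.prop⟩
    exact ((NormedSpace.equicontinuous_TFAE T').out 5 1).1 hbdd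
  have hrange : Set.range (Subtype.val : {i // ‖T i‖ ≤ K} → ι) ∈ l :=
    mem_of_superset hT fun i hi => ⟨⟨i, hi⟩, rfl⟩
  simp_rw [← tendsto_comap'_iff hrange]
  exact hT'.isClosed_setOfPred_tendsto S.continuous

theorem isClosed_setOfPred_exists_tendsto_clm_apply [CompleteSpace W] [l.NeBot] {T : ι → V →L[𝕜] W}
    (hT : ∀ᶠ i in l, ‖T i‖ ≤ K) : IsClosed {x | ∃ y, Tendsto (T · x) l (𝓝 y)} := by
  let T' : ι × ι → V →L[𝕜] W := fun p => T p.2 - T p.1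
  have hT' : ∀ᶠ p in l ×ˢ l, ‖T' p‖ ≤ K + K := by
    filter_upwards [hT.prod_mk hT] with p hp
    exact norm_sub_le_of_le hp.2 hp.1
  have hcauchy (x : V) : (∃ y, Tendsto (T · x) l (𝓝 y)) ↔ Tendsto (T' · x) (l ×ˢ l) (𝓝 0) := by
    rw [← cauchy_map_iff_exists_tendsto, cauchy_map_iff', uniformity_eq_comap_nhds_zero,
      tendsto_comap_iff]
    rfl
  simp_rw [hcauchy]
  exact isClosed_setOfPred_tendsto_clm_apply hT' 0

theorem exists_clm_tendsto_apply [l.NeBot] {T : ι → V →L[𝕜] Z} (hT : ∀ᶠ i in l, ‖T i‖ ≤ K)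
    (hlim : ∀ x, ∃ y, Tendsto (T · x) l (𝓝 y)) :
    ∃ S : V →L[𝕜] Z, ‖S‖ ≤ K ∧ ∀ x, Tendsto (T · x) l (𝓝 (S x)) := by
  choose S hS using hlim
  have hK : 0 ≤ K := let ⟨i, hi⟩ := hT.exists; (norm_nonneg _).trans hi
  let S' : V →ₗ[𝕜] Z :=
    linearMapOfTendsto S (fun i => (T i : V →ₗ[𝕜] Z)) (tendsto_pi_nhds.2 hS)
  have hbound (x : V) : ‖S' x‖ ≤ K * ‖x‖ :=
    le_of_tendsto (hS x).norm (hT.mono fun i hi => (T i).le_of_opNorm_le hi x)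
  exact ⟨S'.mkContinuous K hbound, S'.mkContinuous_norm_le hK hbound, hS⟩

theorem exists_clm₂_tendsto_apply [l.NeBot] {T : ι → V →L[𝕜] W →L[𝕜] Z}
    (hT : ∀ᶠ i in l, ‖T i‖ ≤ K) (hlim : ∀ x y, ∃ z, Tendsto (T · x y) l (𝓝 z)) :
    ∃ S : V →L[𝕜] W →L[𝕜] Z, ∀ x y, Tendsto (T · x y) l (𝓝 (S x y)) := by
  choose S hSnorm hS using fun x =>
    exists_clm_tendsto_apply (hT.mono fun i hi => (T i).le_of_opNorm_le hi x) (hlim x)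
  have hadd (x x' : V) : S (x + x') = S x + S x' := by
    ext y
    refine tendsto_nhds_unique (hS (x + x') y) (((hS x y).add (hS x' y)).congr fun i => ?_)
    simp only [map_add, add_apply]
  have hsmul (c : 𝕜) (x : V) : S (c • x) = c • S x := by
    ext y
    refine tendsto_nhds_unique (hS (c • x) y) (((hS x y).const_smul c).congr fun i => ?_)
    simp only [map_smul, smul_apply]
  exact ⟨LinearMap.mkContinuous ⟨⟨S, hadd⟩, hsmul⟩ K hSnorm, hS⟩

theorem exists_clm₂_tendsto_comp_apply {Y : Type*} [SeminormedAddCommGroup Y] [NormedSpace 𝕜 Y]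
    [CompleteSpace Z] {l : Filter V} [l.NeBot] (hl : ∀ᶠ v in l, ‖v‖ ≤ K)
    (G : V →L[𝕜] Z →L[𝕜] Z) (Λ : Y →L[𝕜] V →L[𝕜] V) (hG : ∀ z, Tendsto (G · z) l (𝓝 z))
    (hΛ : ∀ y v z, ∃ z', Tendsto (fun e => G (Λ y e) (G v z)) l (𝓝 z')) :
    ∃ H : Y →L[𝕜] Z →L[𝕜] Z, ∀ y z, Tendsto (fun e => G (Λ y e) z) l (𝓝 (H y z)) := by
  let T (e : V) : Y →L[𝕜] Z →L[𝕜] Z := G ∘L Λ.flip e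
  have hT : ∀ᶠ e in l, ‖T e‖ ≤ ‖G‖ * (‖Λ.flip‖ * K) := hl.mono fun e he =>
    (G.opNorm_comp_le _).trans (by gcongr; exact Λ.flip.le_opNorm_of_le he)
  have hlim (y : Y) (z : Z) : ∃ z', Tendsto (T · y z) l (𝓝 z') := by
    have hTy : ∀ᶠ e in l, ‖T e y‖ ≤ ‖G‖ * (‖Λ.flip‖ * K) * ‖y‖ :=
      hT.mono fun e he => (T e).le_of_opNorm_le he y
    exact (isClosed_setOfPred_exists_tendsto_clm_apply hTy).mem_of_tendsto (hG z)
      (.of_forall fun v => hΛ y v z)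
  obtain ⟨H, hH⟩ := exists_clm₂_tendsto_apply hT hlim
  exact ⟨H, hH⟩

theorem exists_tendsto_ultrafilter_of_norm_le {E : Type*} [SeminormedAddCommGroup E]
    [ProperSpace E] {U : Ultrafilter ι} {f : ι → E} (hf : ∀ᶠ i in U, ‖f i‖ ≤ K) :
    ∃ y, Tendsto f U (𝓝 y) := by
  have hmem : ∀ᶠ i in U, f i ∈ Metric.closedBall 0 K := by
    simpa only [mem_closedBall_zero_iff] using hf
  obtain ⟨y, -, hy⟩ := (isCompact_closedBall (0 : E) K).ultrafilter_le_nhds (U.map f)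
    (le_principal_iff.2 hmem)
  exact ⟨y, hy⟩

theorem exists_clm_tendsto_apply_ultrafilter [ProperSpace Z] {U : Ultrafilter ι}
    {T : ι → V →L[𝕜] Z} (hT : ∀ᶠ i in U, ‖T i‖ ≤ K) :
    ∃ S : V →L[𝕜] Z, ∀ x, Tendsto (T · x) U (𝓝 (S x)) :=
  let ⟨S, _, hS⟩ := exists_clm_tendsto_apply hT fun x =>
    exists_tendsto_ultrafilter_of_norm_le (hT.mono fun i hi => (T i).le_of_opNorm_le hi x)
  ⟨S, hS⟩

theorem exists_clm₂_tendsto_apply_ultrafilter [ProperSpace Z] {U : Ultrafilter ι}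
    {T : ι → V →L[𝕜] W →L[𝕜] Z} (hT : ∀ᶠ i in U, ‖T i‖ ≤ K) :
    ∃ S : V →L[𝕜] W →L[𝕜] Z, ∀ x y, Tendsto (T · x y) U (𝓝 (S x y)) :=
  exists_clm₂_tendsto_apply hT fun x y => exists_tendsto_ultrafilter_of_norm_le
    (hT.mono fun i hi => (T i x).le_of_opNorm_le ((T i).le_of_opNorm_le hi x) y)

/-- The vectors `x` with `T i x → x` along `l`: the common pattern of the left and right conditions
that define the essential part of a bimodule. -/
def fixedByLimit (T : ι → V →L[𝕜] V) (l : Filter ι) : Submodule 𝕜 V where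
  carrier := {x | Tendsto (T · x) l (𝓝 x)}
  add_mem' hx hy := by simpa only [Set.mem_ofPred_eq, map_add] using hx.add hy
  zero_mem' := by simp only [Set.mem_ofPred_eq, map_zero, tendsto_const_nhds]
  smul_mem' c x hx := by simpa only [Set.mem_ofPred_eq, map_smul] using hx.const_smul c

theorem isClosed_fixedByLimit {T : ι → V →L[𝕜] V} (hT : ∀ᶠ i in l, ‖T i‖ ≤ K) :
    IsClosed (fixedByLimit T l : Set V) :=
  isClosed_setOfPred_tendsto_clm_apply hT (.id 𝕜 V)

end LimitOperators

namespace Envelope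

variable {A B : Type*} [NonUnitalNormedRing A] [NormedSpace ℂ A]
  [NonUnitalNormedRing B] [NormedSpace ℂ B] (E : Envelope A B)

theorem lmul_mul (b : B) (a c : A) : E.lmul b (a * c) = E.lmul b a * c :=
  E.incl_inj (by simp only [E.incl_lmul, E.incl_mul, mul_assoc])

theorem rmul_mul (b : B) (a c : A) : E.rmul b (a * c) = a * E.rmul b c :=
  E.incl_inj (by simp only [E.incl_rmul, E.incl_mul, mul_assoc])

theorem mul_lmul (b : B) (a c : A) : a * E.lmul b c = E.rmul b a * c :=
  E.incl_inj (by simp only [E.incl_lmul, E.incl_rmul, E.incl_mul, mul_assoc])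

theorem mul_lmul_assoc (b c : B) (a : A) : E.lmul (b * c) a = E.lmul b (E.lmul c a) :=
  E.incl_inj (by simp only [E.incl_lmul, mul_assoc])

theorem mul_rmul_assoc (b c : B) (a : A) : E.rmul (b * c) a = E.rmul c (E.rmul b a) :=
  E.incl_inj (by simp only [E.incl_rmul, mul_assoc])

theorem lmul_incl (c a : A) : E.lmul (E.incl c) a = c * a :=
  E.incl_inj (by simp only [E.incl_lmul, E.incl_mul])

theorem rmul_incl (c a : A) : E.rmul (E.incl c) a = a * c :=
  E.incl_inj (by simp only [E.incl_rmul, E.incl_mul])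

end Envelope

attribute [ext] BanachBimodule

namespace BanachBimodule

universe u

section Derivations

variable {A X : Type*} [NonUnitalNormedRing A] [NormedSpace ℂ A]
  [NormedAddCommGroup X] [NormedSpace ℂ X] (M : BanachBimodule A X)

/-- `D : A → X*` is a derivation into the dual bimodule of `X`, in the form in which
`IsAmenable` quantifies over derivations. -/
def IsDerivation (D : A →L[ℂ] X →L[ℂ] ℂ) : Prop :=
  ∀ a c, D (a * c) = (D c).comp (M.r a) + (D a).comp (M.l c)

/-- The inner derivation `a ↦ a·φ − φ·a` into the dual bimodule of `X`. -/
def innerDerivation (φ : X →L[ℂ] ℂ) : A →L[ℂ] X →L[ℂ] ℂ :=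
  .compL ℂ X X ℂ φ ∘L (M.r - M.l)

variable {M}

theorem innerDerivation_apply (φ : X →L[ℂ] ℂ) (a : A) (x : X) :
    M.innerDerivation φ a x = φ (M.r a x) - φ (M.l a x) :=
  map_sub φ _ _

theorem innerDerivation_add (φ ψ : X →L[ℂ] ℂ) :
    M.innerDerivation (φ + ψ) = M.innerDerivation φ + M.innerDerivation ψ := by
  ext a x
  simp only [innerDerivation_apply, add_apply]
  ring

theorem IsDerivation.map_mul_apply {D : A →L[ℂ] X →L[ℂ] ℂ} (hD : M.IsDerivation D) (a c : A)
    (x : X) : D (a * c) x = D c (M.r a x) + D a (M.l c x) :=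
  DFunLike.congr_fun (hD a c) x

theorem IsDerivation.sub {D D' : A →L[ℂ] X →L[ℂ] ℂ} (hD : M.IsDerivation D)
    (hD' : M.IsDerivation D') : M.IsDerivation (D - D') := fun a c => by
  ext x
  simp only [sub_apply, add_apply, ContinuousLinearMap.comp_apply, hD.map_mul_apply,
    hD'.map_mul_apply]
  ring

theorem isDerivation_innerDerivation (φ : X →L[ℂ] ℂ) : M.IsDerivation (M.innerDerivation φ) :=
  fun a c => by
    ext x
    simp only [add_apply, ContinuousLinearMap.comp_apply, innerDerivation_apply, M.l_mul, M.r_mul,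
      M.l_r]
    ring

theorem isAmenable_iff [CompleteSpace A] : IsAmenable.{u} A ↔
    ∀ (X : Type u) [NormedAddCommGroup X] [NormedSpace ℂ X] [CompleteSpace X]
      (M : BanachBimodule A X) (D : A →L[ℂ] X →L[ℂ] ℂ),
      M.IsDerivation D → ∃ φ, D = M.innerDerivation φ := by
  have inner_iff {X : Type u} [NormedAddCommGroup X] [NormedSpace ℂ X] (M : BanachBimodule A X)
      (D : A →L[ℂ] X →L[ℂ] ℂ) (φ : X →L[ℂ] ℂ) :
      (∀ a, D a = φ.comp (M.r a) - φ.comp (M.l a)) ↔ D = M.innerDerivation φ := by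
    simp only [ContinuousLinearMap.ext_iff, innerDerivation_apply, sub_apply,
      ContinuousLinearMap.comp_apply]
  simp only [IsAmenable, inner_iff, IsDerivation]

end Derivations

section EssentialPart

variable {A X : Type*} [NonUnitalNormedRing A] [NormedSpace ℂ A]
  [NormedAddCommGroup X] [NormedSpace ℂ X] (M : BanachBimodule A X)

/-- The essential part of `X` along the filter `l`, meant to be a bounded approximate identity of
`A`: the vectors `x` with `e·x → x` and `x·e → x` as `e` runs along `l`. -/
def essentialPart (l : Filter A) : Submodule ℂ X :=
  fixedByLimit M.l l ⊓ fixedByLimit M.r l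

variable {M} {l : Filter A} {C : ℝ}

theorem isClosed_essentialPart (hC : ∀ᶠ a in l, ‖a‖ ≤ C) :
    IsClosed (M.essentialPart l : Set X) :=
  (isClosed_fixedByLimit (hC.mono fun _ ha => M.l.le_opNorm_of_le ha)).inter
    (isClosed_fixedByLimit (hC.mono fun _ ha => M.r.le_opNorm_of_le ha))

theorem tendsto_l_mul_right (hl : l.IsApproximateUnit) (a : A) (x : X) :
    Tendsto (fun e => M.l (e * a) x) l (𝓝 (M.l a x)) :=
  ((M.l.flip x).continuous.tendsto a).comp (hl.tendsto_mul_right a)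

theorem tendsto_r_mul_left (hl : l.IsApproximateUnit) (a : A) (x : X) :
    Tendsto (fun e => M.r (a * e) x) l (𝓝 (M.r a x)) :=
  ((M.r.flip x).continuous.tendsto a).comp (hl.tendsto_mul_left a)

theorem l_mem_essentialPart (hl : l.IsApproximateUnit) (a : A) {x : X}
    (hx : Tendsto (M.r · x) l (𝓝 x)) : M.l a x ∈ M.essentialPart l := by
  refine ⟨?_, ?_⟩
  · exact (tendsto_l_mul_right hl a x).congr fun e => M.l_mul e a x
  · exact (((M.l a).continuous.tendsto x).comp hx).congr fun e => (M.l_r a e x).symm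

theorem r_mem_essentialPart (hl : l.IsApproximateUnit) (a : A) {x : X}
    (hx : Tendsto (M.l · x) l (𝓝 x)) : M.r a x ∈ M.essentialPart l := by
  refine ⟨?_, ?_⟩
  · exact (((M.r a).continuous.tendsto x).comp hx).congr fun e => M.l_r e a x
  · exact (tendsto_r_mul_left hl a x).congr fun e => M.r_mul a e x

theorem l_r_mem_essentialPart (hl : l.IsApproximateUnit) (a c : A) (x : X) :
    M.l a (M.r c x) ∈ M.essentialPart l :=
  l_mem_essentialPart hl a
    ((tendsto_r_mul_left hl c x).congr fun e => M.r_mul c e x)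

end EssentialPart

section Submodule

variable {A X : Type*} [NonUnitalNormedRing A] [NormedSpace ℂ A]
  [NormedAddCommGroup X] [NormedSpace ℂ X] (M : BanachBimodule A X)

/-- The restriction of a bounded action `G` on `X` to a `G`-invariant subspace `S`, used to form
sub-bimodules. -/
def restrictAction (G : A →L[ℂ] X →L[ℂ] X) (S : Submodule ℂ X)
    (hS : ∀ a, ∀ x ∈ S, G a x ∈ S) : A →L[ℂ] S →L[ℂ] S :=
  LinearMap.mkContinuous₂
    (LinearMap.mk₂ ℂ (fun a (x : S) => (⟨G a x, hS a x x.2⟩ : S))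
      (fun _ _ _ => by ext; simp) (fun _ _ _ => by ext; simp)
      (fun _ _ _ => by ext; simp) (fun _ _ _ => by ext; simp))
    ‖G‖ (fun a x => G.le_opNorm₂ a x)

/-- The sub-bimodule on an invariant subspace. -/
def submodule (S : Submodule ℂ X) (hl : ∀ a, ∀ x ∈ S, M.l a x ∈ S)
    (hr : ∀ a, ∀ x ∈ S, M.r a x ∈ S) : BanachBimodule A S where
  l := restrictAction M.l S hl
  r := restrictAction M.r S hr
  l_mul a c x := Subtype.ext (M.l_mul a c x)
  r_mul a c x := Subtype.ext (M.r_mul a c x)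
  l_r a c x := Subtype.ext (M.l_r a c x)

end Submodule

section Extension

variable {A B X : Type*} [NonUnitalNormedRing A] [NormedSpace ℂ A]
  [NonUnitalNormedRing B] [NormedSpace ℂ B] [NormedAddCommGroup X] [NormedSpace ℂ X]

/-- `X` is essential along the filter `l`, meant to be a bounded approximate identity of `A`:
`e·x → x` and `x·e → x` for every `x ∈ X` as `e` runs along `l`. -/
structure IsEssential (M : BanachBimodule A X) (l : Filter A) : Prop where
  tendsto_l : ∀ x, Tendsto (M.l · x) l (𝓝 x)
  tendsto_r : ∀ x, Tendsto (M.r · x) l (𝓝 x)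

variable {E : Envelope A B} {M : BanachBimodule A X} {N : BanachBimodule B X} {l : Filter A}
  {U : Ultrafilter A} {C : ℝ} {D : A →L[ℂ] X →L[ℂ] ℂ}

theorem IsEssential.ext_comp_l [l.NeBot] {Z : Type*} [TopologicalSpace Z] [T2Space Z]
    (hM : M.IsEssential l) {f g : X → Z} (hf : Continuous f) (hg : Continuous g)
    (h : ∀ a x, f (M.l a x) = g (M.l a x)) (x : X) : f x = g x :=
  tendsto_nhds_unique ((hf.tendsto x).comp (hM.tendsto_l x))
    (((hg.tendsto x).comp (hM.tendsto_l x)).congr fun a => (h a x).symm)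

theorem IsEssential.ext_l [l.NeBot] (hM : M.IsEssential l) {x y : X}
    (h : ∀ a, M.l a x = M.l a y) : x = y :=
  tendsto_nhds_unique (hM.tendsto_l x) ((hM.tendsto_l y).congr fun a => (h a).symm)

theorem IsEssential.ext_r [l.NeBot] (hM : M.IsEssential l) {x y : X}
    (h : ∀ a, M.r a x = M.r a y) : x = y :=
  tendsto_nhds_unique (hM.tendsto_r x) ((hM.tendsto_r y).congr fun a => (h a).symm)

theorem IsEssential.exists_left_action [CompleteSpace X] (hM : M.IsEssential l)
    (hl : l.IsApproximateUnit) (hC : ∀ᶠ a in l, ‖a‖ ≤ C) (E : Envelope A B) :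
    ∃ L : B →L[ℂ] X →L[ℂ] X, ∀ b a x, M.l a (L b x) = M.l (E.rmul b a) x := by
  have := hl.neBot
  obtain ⟨L, hL⟩ := exists_clm₂_tendsto_comp_apply hC M.l E.lmul hM.tendsto_l fun b a x => by
    refine ⟨M.l (E.lmul b a) x, ?_⟩
    simp_rw [← M.l_mul, ← E.lmul_mul]
    exact ((M.l.flip x ∘L E.lmul b).continuous.tendsto a).comp (hl.tendsto_mul_right a)
  refine ⟨L, fun b a x => tendsto_nhds_unique (((M.l a).continuous.tendsto _).comp (hL b x)) ?_⟩
  refine (((M.l (E.rmul b a)).continuous.tendsto x).comp (hM.tendsto_l x)).congr fun e => ?_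
  simp only [Function.comp_apply, ← M.l_mul, E.mul_lmul]

theorem IsEssential.exists_right_action [CompleteSpace X] (hM : M.IsEssential l)
    (hl : l.IsApproximateUnit) (hC : ∀ᶠ a in l, ‖a‖ ≤ C) (E : Envelope A B) :
    ∃ R : B →L[ℂ] X →L[ℂ] X, ∀ b a x, M.r a (R b x) = M.r (E.lmul b a) x := by
  have := hl.neBot
  obtain ⟨R, hR⟩ := exists_clm₂_tendsto_comp_apply hC M.r E.rmul hM.tendsto_r fun b a x => by
    refine ⟨M.r (E.rmul b a) x, ?_⟩
    simp_rw [← M.r_mul, ← E.rmul_mul]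
    exact ((M.r.flip x ∘L E.rmul b).continuous.tendsto a).comp (hl.tendsto_mul_left a)
  refine ⟨R, fun b a x => tendsto_nhds_unique (((M.r a).continuous.tendsto _).comp (hR b x)) ?_⟩
  refine (((M.r (E.lmul b a)).continuous.tendsto x).comp (hM.tendsto_r x)).congr fun e => ?_
  simp only [Function.comp_apply, ← M.r_mul, E.mul_lmul]

theorem IsEssential.exists_restrict_eq [CompleteSpace X] (hM : M.IsEssential l)
    (hl : l.IsApproximateUnit) (hC : ∀ᶠ a in l, ‖a‖ ≤ C) (E : Envelope A B) :
    ∃ N : BanachBimodule B X, N.restrict E = M := by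
  have := hl.neBot
  obtain ⟨L, hL⟩ := hM.exists_left_action hl hC E
  obtain ⟨R, hR⟩ := hM.exists_right_action hl hC E
  have l_R_comm (a : A) (b : B) (x : X) : M.l a (R b x) = R b (M.l a x) :=
    hM.ext_r fun c => by rw [hR, M.l_r, hR, ← M.l_r]
  refine ⟨⟨L, R, ?_, ?_, ?_⟩, ?_⟩
  · exact fun b c x => hM.ext_l fun a => by rw [hL, hL, hL, E.mul_rmul_assoc]
  · exact fun b c x => hM.ext_r fun a => by rw [hR, hR, hR, E.mul_lmul_assoc]
  · exact fun b c x => hM.ext_l fun a => by rw [l_R_comm, hL, hL, l_R_comm]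
  · ext c x
    · exact hM.ext_l fun a => by
        rw [← M.l_mul, ← E.rmul_incl]
        exact hL (E.incl c) a x
    · exact hM.ext_r fun a => by
        rw [← M.r_mul, ← E.lmul_incl]
        exact hR (E.incl c) a x

-- The norm on `A →L[ℂ] B →L[ℂ] X →L[ℂ] ℂ` is not found at the default depth.
set_option maxSynthPendingDepth 3 in
theorem IsDerivation.exists_clm_apply_l_eq (hD : (N.restrict E).IsDerivation D)
    (hU : (U : Filter A).IsApproximateUnit) (hC : ∀ᶠ a in (U : Filter A), ‖a‖ ≤ C) :
    ∃ D' : B →L[ℂ] X →L[ℂ] ℂ, ∀ b a x,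
      D' b (N.l (E.incl a) x) = D (E.lmul b a) x - D a (N.r b x) := by
  let T : A →L[ℂ] B →L[ℂ] X →L[ℂ] ℂ :=
    .compL ℂ B A (X →L[ℂ] ℂ) D ∘L E.lmul.flip -
      (ContinuousLinearMap.compL ℂ B (X →L[ℂ] X) (X →L[ℂ] ℂ)).flip N.r ∘L .compL ℂ X X ℂ ∘L D
  have hT (e : A) (b : B) (x : X) : T e b x = D (E.lmul b e) x - D e (N.r b x) := rfl
  have hTC : ∀ᶠ e in (U : Filter A), ‖T e‖ ≤ ‖T‖ * C := hC.mono fun _ he => T.le_opNorm_of_le he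
  obtain ⟨D', hD'⟩ := exists_clm₂_tendsto_apply_ultrafilter hTC
  have hTl (e : A) (b : B) (a : A) (x : X) :
      T e b (N.l (E.incl a) x) = D (E.lmul b (e * a)) x - D (e * a) (N.r b x) := by
    have hlmul : D (E.lmul b e * a) x =
        D a (N.r (E.incl e) (N.r b x)) + D (E.lmul b e) (N.l (E.incl a) x) := by
      have h := hD.map_mul_apply (E.lmul b e) a x
      rwa [show (N.restrict E).r (E.lmul b e) x = N.r (E.incl e) (N.r b x) from
        (by rw [← N.r_mul, ← E.incl_lmul]; rfl)] at h
    have hmul : D (e * a) (N.r b x) =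
        D a (N.r (E.incl e) (N.r b x)) + D e (N.l (E.incl a) (N.r b x)) :=
      hD.map_mul_apply e a (N.r b x)
    rw [hT, E.lmul_mul, hlmul, hmul, N.l_r]
    ring
  refine ⟨D', fun b a x => tendsto_nhds_unique (hD' b _) ?_⟩
  simp_rw [hTl]
  exact (((D.flip x ∘L E.lmul b) - D.flip (N.r b x)).continuous.tendsto a).comp
    (hU.tendsto_mul_right a)

theorem IsEssential.exists_isDerivation_extension (hN : (N.restrict E).IsEssential U)
    (hU : (U : Filter A).IsApproximateUnit) (hC : ∀ᶠ a in (U : Filter A), ‖a‖ ≤ C)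
    (hD : (N.restrict E).IsDerivation D) :
    ∃ D' : B →L[ℂ] X →L[ℂ] ℂ, N.IsDerivation D' ∧ ∀ a, D' (E.incl a) = D a := by
  obtain ⟨D', hD'⟩ := hD.exists_clm_apply_l_eq hU hC
  have ext_dual {f g : X →L[ℂ] ℂ} (h : ∀ a x, f (N.l (E.incl a) x) = g (N.l (E.incl a) x)) :
      f = g :=
    ContinuousLinearMap.ext (hN.ext_comp_l f.continuous g.continuous h)
  refine ⟨D', fun b c => ext_dual fun a x => ?_, fun c => ext_dual fun a x => ?_⟩
  · have hl : N.l c (N.l (E.incl a) x) = N.l (E.incl (E.lmul c a)) x := by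
      rw [← N.l_mul, E.incl_lmul]
    simp only [add_apply, ContinuousLinearMap.comp_apply, hl, N.l_r, hD', E.mul_lmul_assoc,
      N.r_mul]
    ring
  · rw [hD', E.lmul_incl, hD.map_mul_apply]
    exact add_sub_cancel_left _ _

end Extension

section EssentialPartInner

variable {A B : Type*} {X : Type u} [NonUnitalNormedRing A] [NormedSpace ℂ A]
  [NonUnitalNormedRing B] [NormedSpace ℂ B] [CompleteSpace B]
  [NormedAddCommGroup X] [NormedSpace ℂ X] {M : BanachBimodule A X} {l : Filter A}
  {U : Ultrafilter A} {C : ℝ} {D : A →L[ℂ] X →L[ℂ] ℂ}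

theorem isEssential_submodule_essentialPart
    (hl : ∀ a, ∀ x ∈ M.essentialPart l, M.l a x ∈ M.essentialPart l)
    (hr : ∀ a, ∀ x ∈ M.essentialPart l, M.r a x ∈ M.essentialPart l) :
    (M.submodule (M.essentialPart l) hl hr).IsEssential l where
  tendsto_l x := tendsto_subtype_rng.2 x.2.1
  tendsto_r x := tendsto_subtype_rng.2 x.2.2

theorem IsEssential.exists_eq_innerDerivation [CompleteSpace X] (hM : M.IsEssential U)
    (hU : (U : Filter A).IsApproximateUnit) (hC : ∀ᶠ a in (U : Filter A), ‖a‖ ≤ C)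
    (E : Envelope A B) (hB : IsAmenable.{u} B) (hD : M.IsDerivation D) :
    ∃ φ, D = M.innerDerivation φ := by
  obtain ⟨N, rfl⟩ := hM.exists_restrict_eq hU hC E
  obtain ⟨D', hD', hext⟩ := hM.exists_isDerivation_extension hU hC hD
  obtain ⟨φ, rfl⟩ := isAmenable_iff.1 hB X N D' hD'
  exact ⟨φ, ContinuousLinearMap.ext fun a => (hext a).symm⟩

theorem exists_eqOn_essentialPart_innerDerivation [CompleteSpace X]
    (hU : (U : Filter A).IsApproximateUnit) (hC : ∀ᶠ a in (U : Filter A), ‖a‖ ≤ C)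
    (E : Envelope A B) (hB : IsAmenable.{u} B) (hD : M.IsDerivation D) :
    ∃ φ, ∀ a, ∀ x ∈ M.essentialPart U, D a x = M.innerDerivation φ a x := by
  let S := M.essentialPart (U : Filter A)
  have hl (a : A) (x : X) (hx : x ∈ S) : M.l a x ∈ S := l_mem_essentialPart hU a hx.2
  have hr (a : A) (x : X) (hx : x ∈ S) : M.r a x ∈ S := r_mem_essentialPart hU a hx.1
  have : CompleteSpace S := (isClosed_essentialPart hC).completeSpace_coe
  let D₀ : A →L[ℂ] S →L[ℂ] ℂ := (ContinuousLinearMap.compL ℂ S X ℂ).flip S.subtypeL ∘L D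
  have hD₀ : (M.submodule S hl hr).IsDerivation D₀ := fun a c => by
    ext x
    exact hD.map_mul_apply a c x
  obtain ⟨φ₀, hφ₀⟩ := (isEssential_submodule_essentialPart hl hr).exists_eq_innerDerivation
    hU hC E hB hD₀
  obtain ⟨φ, hφ, -⟩ := exists_extension_norm_eq S φ₀
  refine ⟨φ, fun a x hx => ?_⟩
  have hx₀ : D₀ a ⟨x, hx⟩ = φ₀ ⟨M.r a x, hr a x hx⟩ - φ₀ ⟨M.l a x, hl a x hx⟩ := by
    rw [hφ₀]
    exact innerDerivation_apply φ₀ a _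
  rw [innerDerivation_apply]
  exact hx₀.trans (congrArg₂ (· - ·) (hφ _).symm (hφ _).symm)

end EssentialPartInner

section TrivialPart

variable {A X : Type*} [NonUnitalNormedRing A] [NormedSpace ℂ A]
  [NormedAddCommGroup X] [NormedSpace ℂ X] {M : BanachBimodule A X} {D : A →L[ℂ] X →L[ℂ] ℂ}
  {l : Filter A} {U : Ultrafilter A} {C : ℝ} {α : X →L[ℂ] ℂ}

theorem apply_l_r_eq_zero_of_tendsto [l.NeBot] (hα : ∀ x, Tendsto (D · x) l (𝓝 (α x)))
    (hvanish : ∀ a b c x, D a (M.l b (M.r c x)) = 0) (b c : A) (x : X) :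
    α (M.l b (M.r c x)) = 0 :=
  tendsto_nhds_unique (hα _) (by simp_rw [hvanish]; exact tendsto_const_nhds)

theorem IsDerivation.apply_r_eq (hD : M.IsDerivation D) (hl : l.IsApproximateUnit)
    (hα : ∀ x, Tendsto (D · x) l (𝓝 (α x)))
    (hvanish : ∀ a b c x, D a (M.l b (M.r c x)) = 0) (a c : A) (x : X) :
    D a (M.r c x) = α (M.r (c * a) x) := by
  have := hl.neBot
  have hmul (e : A) : D (a * e) (M.r c x) = D e (M.r (c * a) x) := by
    rw [hD.map_mul_apply, hvanish, add_zero, M.r_mul]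
  have hlim := ((D.flip (M.r c x)).continuous.tendsto a).comp (hl.tendsto_mul_left a)
  exact tendsto_nhds_unique hlim ((hα _).congr fun e => (hmul e).symm)

theorem IsDerivation.apply_eq_add (hD : M.IsDerivation D) (hl : l.IsApproximateUnit)
    (hα : ∀ x, Tendsto (D · x) l (𝓝 (α x)))
    (hvanish : ∀ a b c x, D a (M.l b (M.r c x)) = 0) (a : A) (x : X) :
    D a x = α (M.r a x) + α (M.l a x) := by
  have := hl.neBot
  have hmul (e : A) : D (e * a) x = α (M.r (e * a) x) + D e (M.l a x) := by
    rw [hD.map_mul_apply, hD.apply_r_eq hl hα hvanish]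
  have hlim := ((D.flip x).continuous.tendsto a).comp (hl.tendsto_mul_right a)
  have hlim' := ((α ∘L M.r.flip x).continuous.tendsto a).comp (hl.tendsto_mul_right a)
  exact tendsto_nhds_unique hlim ((hlim'.add (hα _)).congr fun e => (hmul e).symm)

theorem IsDerivation.exists_eq_innerDerivation_of_vanish (hD : M.IsDerivation D)
    (hU : (U : Filter A).IsApproximateUnit) (hC : ∀ᶠ a in (U : Filter A), ‖a‖ ≤ C)
    (hvanish : ∀ a b c x, D a (M.l b (M.r c x)) = 0) : ∃ φ, D = M.innerDerivation φ := by
  obtain ⟨α, hα⟩ := exists_clm_tendsto_apply_ultrafilter (hC.mono fun _ he => D.le_opNorm_of_le he)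
  have hαl : ∀ᶠ e in (U : Filter A), ‖α ∘L M.l e‖ ≤ ‖α‖ * (‖M.l‖ * C) := hC.mono fun e he =>
    (α.opNorm_comp_le _).trans (by gcongr; exact M.l.le_opNorm_of_le he)
  obtain ⟨γ, hγ⟩ := exists_clm_tendsto_apply_ultrafilter hαl
  have hγr (a : A) (x : X) : γ (M.r a x) = 0 :=
    tendsto_nhds_unique (hγ _) (tendsto_const_nhds.congr fun e =>
      (apply_l_r_eq_zero_of_tendsto hα hvanish e a x).symm)
  have hγl (a : A) (x : X) : γ (M.l a x) = α (M.l a x) :=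
    tendsto_nhds_unique (hγ _) (((α.continuous.tendsto _).comp (tendsto_l_mul_right hU a x)).congr
      fun e => congrArg α (M.l_mul e a x))
  refine ⟨α - (2 : ℂ) • γ, ?_⟩
  ext a x
  simp only [innerDerivation_apply, sub_apply, smul_apply, hγr, hγl, smul_eq_mul,
    hD.apply_eq_add hU hα hvanish]
  ring

end TrivialPart

end BanachBimodule

theorem HasBAI.exists_ultrafilter {A : Type*} [NonUnitalNormedRing A] [NormedSpace ℂ A]
    (hA : HasBAI A) :
    ∃ U : Ultrafilter A, (U : Filter A).IsApproximateUnit ∧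
      ∃ C, ∀ᶠ a in (U : Filter A), ‖a‖ ≤ C := by
  obtain ⟨ι, p, e, hp, ⟨C, hC⟩, he⟩ := hA
  refine ⟨.of (p.map e),
    { tendsto_mul_left := fun a => ?_, tendsto_mul_right := fun a => ?_ }, C, ?_⟩
  · exact (tendsto_map'_iff.2 (he a).2).mono_left (Ultrafilter.of_le _)
  · exact (tendsto_map'_iff.2 (he a).1).mono_left (Ultrafilter.of_le _)
  · exact Ultrafilter.of_le _ (eventually_map.2 (.of_forall hC))

open BanachBimodule in
theorem statement13_general.{u} {A B : Type*} [NonUnitalNormedRing A] [NormedSpace ℂ A]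
    [CompleteSpace A] [NonUnitalNormedRing B] [NormedSpace ℂ B] [CompleteSpace B]
    (E : Envelope A B) (hB : IsAmenable.{u} B) (hA : HasBAI A) : IsAmenable.{u} A := by
  obtain ⟨U, hU, C, hC⟩ := hA.exists_ultrafilter
  refine isAmenable_iff.2 fun X _ _ _ M D hD => ?_
  obtain ⟨φ, hφ⟩ := exists_eqOn_essentialPart_innerDerivation hU hC E hB hD
  have hvanish (a b c : A) (x : X) : (D - M.innerDerivation φ) a (M.l b (M.r c x)) = 0 :=
    sub_eq_zero.2 (hφ a _ (l_r_mem_essentialPart hU b c x))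
  obtain ⟨ψ, hψ⟩ := (hD.sub (isDerivation_innerDerivation φ)).exists_eq_innerDerivation_of_vanish
    hU hC hvanish
  exact ⟨φ + ψ, (sub_eq_iff_eq_add'.1 hψ).trans (innerDerivation_add φ ψ).symm⟩

/-- If `B` is amenable and `A` is a closed two-sided ideal of `B` (an isometric envelope)
possessing a bounded approximate identity, then `A` is amenable. -/
theorem statement13 (E : Envelope A B) (hiso : ∀ a : A, ‖E.incl a‖ = ‖a‖)
    (hB : IsAmenable.{u} B) (hBAI : HasBAI A) : IsAmenable.{u} A :=
  statement13_general E hB hBAI
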